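/- Let f ∈ ℂ[x₁,…,x_{n+1}] be a strongly tame polynomial. Then the Milnor algebra V_f := ℂ[x]/⟨∂f/∂x₁,…,∂f/∂x_{n+1}⟩ is a finite-dimensional ℂ-vector space, and the set of eigenvalues of the ℂ-linear operator A : V_f → V_f given by multiplication by f equals the set C := f(Sing(f)) of critical values of f. -/

import Mathlib

/-!
Both halves of the theorem rest on the Nullstellensatz. A filtration argument compares `f` with its
last quasi-homogeneous part `g`: the ideal of leading forms of the Jacobian ideal of `f` contains
the Jacobian ideal of `g`, whose only zero is the origin and whose quotient is therefore
finite-dimensional; finitely many monomials spanning `K[x]` modulo leading forms also span it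
modulo the Jacobian ideal of `f`, by descent on the weight. The eigenvalues of a multiplication
operator are the spectrum of the multiplier, and a class `[p] - c` in `K[x] ⧸ J` fails to be
invertible exactly when it lies in a maximal ideal, that is, vanishes at a zero of `J`.
-/

open MvPolynomial

section Spectrum

theorem spectrum_mulLeft {R A : Type*} [CommSemiring R] [Ring A] [Algebra R A] (a : A) :
    spectrum R (LinearMap.mulLeft R a) = spectrum R a := by
  ext c
  have h : algebraMap R (Module.End R A) c - LinearMap.mulLeft R a =
      Algebra.lmul R A (algebraMap R A c - a) := by
    rw [map_sub, AlgHom.commutes]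
    rfl
  rw [spectrum.mem_iff, spectrum.mem_iff, h, Algebra.lmul_isUnit_iff]

variable {K σ : Type*} [Field K] [IsAlgClosed K] [Finite σ]

theorem exists_mem_zeroLocus_of_not_isUnit_mk {J : Ideal (MvPolynomial σ K)}
    {p : MvPolynomial σ K} (hp : ¬IsUnit (Ideal.Quotient.mk J p)) :
    ∃ x ∈ zeroLocus K J, eval x p = 0 := by
  obtain ⟨M, hM, hpM⟩ := exists_max_ideal_of_mem_nonunits hp
  obtain ⟨x, hx⟩ := eq_vanishingIdeal_singleton_of_isMaximal K
    (Ideal.comap_isMaximal_of_surjective _ Ideal.Quotient.mk_surjective (K := M))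
  have eval_eq_zero {q : MvPolynomial σ K} (hq : Ideal.Quotient.mk J q ∈ M) : eval x q = 0 := by
    rwa [← Ideal.mem_comap, hx, mem_vanishingIdeal_singleton_iff, aeval_eq_eval] at hq
  refine ⟨x, fun q hq => ?_, eval_eq_zero hpM⟩
  rw [aeval_eq_eval]
  exact eval_eq_zero (by simp [Ideal.Quotient.eq_zero_iff_mem.2 hq])

theorem spectrum_quotient_mk (J : Ideal (MvPolynomial σ K)) (p : MvPolynomial σ K) :
    spectrum K (Ideal.Quotient.mk J p) = (fun x => eval x p) '' zeroLocus K J := by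
  ext c
  constructor
  · intro hc
    have hmk : algebraMap K (MvPolynomial σ K ⧸ J) c - Ideal.Quotient.mk J p =
        Ideal.Quotient.mk J (C c - p) := (map_sub (Ideal.Quotient.mk J) (C c) p).symm
    rw [spectrum.mem_iff, hmk] at hc
    obtain ⟨x, hx, hxc⟩ := exists_mem_zeroLocus_of_not_isUnit_mk hc
    rw [map_sub, eval_C, sub_eq_zero] at hxc
    exact ⟨x, hx, hxc.symm⟩
  · rintro ⟨x, hx, rfl⟩
    exact AlgHom.apply_mem_spectrum (Ideal.Quotient.liftₐ J (aeval x) hx) (Ideal.Quotient.mk J p)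

end Spectrum

section FiniteQuotient

theorem finite_quotient_iff_exists_restrictSupport_sup_eq_top {R σ : Type*} [CommRing R]
    {I : Ideal (MvPolynomial σ R)} :
    Module.Finite R (MvPolynomial σ R ⧸ I) ↔
      ∃ s : Finset (σ →₀ ℕ), restrictSupport R (s : Set (σ →₀ ℕ)) ⊔ I.restrictScalars R = ⊤ := by
  classical
  let π := (Ideal.Quotient.mkₐ R I).toLinearMap
  have hker : LinearMap.ker π = I.restrictScalars R := by
    ext p
    exact Ideal.Quotient.eq_zero_iff_mem
  have hrange : LinearMap.range π = ⊤ :=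
    LinearMap.range_eq_top.2 (Ideal.Quotient.mkₐ_surjective R I)
  have map_eq_span (s : Set (σ →₀ ℕ)) : (restrictSupport R s).map π =
      Submodule.span R ((fun β => π (monomial β 1)) '' s) := by
    rw [restrictSupport_eq_span, Submodule.map_span, Set.image_image]
  have span_univ : Submodule.span R ((fun β => π (monomial β 1)) '' Set.univ) = ⊤ := by
    rw [← map_eq_span, restrictSupport_univ, Submodule.map_top, hrange]
  simp only [← hker, ← LinearMap.map_eq_top_iff hrange, map_eq_span]
  constructor
  · intro h
    have hfg := h.fg_top
    rw [← span_univ, Submodule.fg_span_iff_fg_span_finset_subset] at hfg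
    obtain ⟨t, ht, hspan⟩ := hfg
    obtain ⟨s, -, rfl⟩ := Finset.subset_set_image_iff.1 ht
    exact ⟨s, by rw [← Finset.coe_image, ← hspan, span_univ]⟩
  · rintro ⟨s, hs⟩
    exact ⟨Submodule.fg_def.2 ⟨_, s.finite_toSet.image _, hs⟩⟩

theorem finite_quotient_of_isIntegral_X {R σ : Type*} [CommRing R] [Finite σ]
    {I : Ideal (MvPolynomial σ R)} (h : ∀ i, IsIntegral R (Ideal.Quotient.mk I (X i))) :
    Module.Finite R (MvPolynomial σ R ⧸ I) := by
  have hadjoin : Algebra.adjoin R (Set.range fun i => Ideal.Quotient.mk I (X i)) = ⊤ := by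
    have := congrArg (Subalgebra.map (Ideal.Quotient.mkₐ R I)) (adjoin_range_X (R := R) (σ := σ))
    rwa [AlgHom.map_adjoin, ← Set.range_comp, Algebra.map_top,
      (AlgHom.range_eq_top _).2 (Ideal.Quotient.mkₐ_surjective R I)] at this
  have hint : Algebra.IsIntegral R (MvPolynomial σ R ⧸ I) := by
    rw [← integralClosure_eq_top_iff, ← top_le_iff, ← hadjoin]
    exact Algebra.adjoin_le (Set.range_subset_iff.2 h)
  exact Algebra.IsIntegral.finite

theorem finite_quotient_of_finite_zeroLocus {K σ : Type*} [Field K] [IsAlgClosed K] [Finite σ]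
    {I : Ideal (MvPolynomial σ K)} (h : (zeroLocus K I).Finite) :
    Module.Finite K (MvPolynomial σ K ⧸ I) := by
  refine finite_quotient_of_isIntegral_X fun i => ?_
  let q : Polynomial K := ∏ x ∈ h.toFinset, (Polynomial.X - Polynomial.C (x i))
  have hq : Polynomial.aeval (X i) q ∈ I.radical := by
    rw [← vanishingIdeal_zeroLocus_eq_radical (K := K), mem_vanishingIdeal_iff]
    intro x hx
    rw [← Polynomial.aeval_algHom_apply, aeval_X, Polynomial.coe_aeval_eq_eval,
      Polynomial.eval_prod]
    exact Finset.prod_eq_zero (h.mem_toFinset.2 hx) (by simp)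
  obtain ⟨k, hk⟩ := hq
  refine ⟨q ^ k, (Polynomial.monic_prod_X_sub_C _ _).pow k, ?_⟩
  rw [← Polynomial.aeval_def, ← Ideal.Quotient.mkₐ_eq_mk K, Polynomial.aeval_algHom_apply,
    map_pow]
  exact Ideal.Quotient.eq_zero_iff_mem.2 hk

end FiniteQuotient

section WeightFiltration

theorem weightedHomogeneousComponent_mul {R σ M : Type*} [CommSemiring R] [AddCommMonoid M]
    [Finset.HasAntidiagonal M] (w : σ → M) (n : M) (p q : MvPolynomial σ R) :
    weightedHomogeneousComponent w n (p * q) = ∑ kl ∈ Finset.HasAntidiagonal.antidiagonal n,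
      weightedHomogeneousComponent w kl.1 p * weightedHomogeneousComponent w kl.2 q := by
  classical
  let := weightedGradedAlgebra R w
  have decompose_apply (m : M) (r : MvPolynomial σ R) :
      (DirectSum.decompose (weightedHomogeneousSubmodule R w) r m : MvPolynomial σ R) =
        weightedHomogeneousComponent w m r :=
    weightedDecomposition.decompose'_apply R w r m
  simp only [← decompose_apply, DirectSum.decompose_mul,
    DirectSum.coe_mul_apply_eq_sum_antidiagonal]

theorem weightedHomogeneousComponent_pderiv {R σ M : Type*} [CommSemiring R]
    [AddCancelCommMonoid M] (w : σ → M) (m : M) (i : σ) (p : MvPolynomial σ R) :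
    weightedHomogeneousComponent w m (pderiv i p) =
      pderiv i (weightedHomogeneousComponent w (m + w i) p) := by
  classical
  ext β
  simp [coeff_pderiv, coeff_weightedHomogeneousComponent, Finsupp.weight_single]

/-- The step of the weight filtration that consists of the polynomials all of whose monomials have
weight less than `m`. The inequality is strict so that the steps start with `⊥` at `m = 0`. -/
noncomputable def weightLT (R : Type*) {σ : Type*} [CommSemiring R] (w : σ → ℕ) (m : ℕ) :
    Submodule R (MvPolynomial σ R) :=
  restrictSupport R {β | Finsupp.weight w β < m}

section CommSemiring

variable {R σ : Type*} [CommSemiring R] {w : σ → ℕ} {k l m : ℕ} {p q : MvPolynomial σ R}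

theorem mem_weightLT : p ∈ weightLT R w m ↔ ∀ β, m ≤ Finsupp.weight w β → coeff β p = 0 := by
  rw [weightLT, mem_restrictSupport_iff]
  refine forall_congr' fun β => ?_
  rw [Finset.mem_coe, mem_support_iff, Set.mem_ofPred_eq, ← not_le, not_imp_not]

theorem mem_weightLT_of_weightedTotalDegree_lt (h : weightedTotalDegree w p < m) :
    p ∈ weightLT R w m :=
  fun _ hβ => (le_weightedTotalDegree w hβ).trans_lt h

theorem weightLT_zero : weightLT R w 0 = ⊥ :=
  (Submodule.eq_bot_iff _).2 fun p hp => by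
    ext β
    exact mem_weightLT.1 hp β (Nat.zero_le _)

theorem mul_mem_weightLT (hp : IsWeightedHomogeneous w p k) (hq : q ∈ weightLT R w l) :
    p * q ∈ weightLT R w (k + l) := by
  classical
  rw [mem_weightLT]
  intro β hβ
  rw [coeff_mul]
  refine Finset.sum_eq_zero fun γδ hγδ => ?_
  rw [← Finset.HasAntidiagonal.mem_antidiagonal.1 hγδ, map_add] at hβ
  by_cases hγ : coeff γδ.1 p = 0
  · rw [hγ, zero_mul]
  · rw [hp hγ] at hβ
    rw [mem_weightLT.1 hq γδ.2 (by lia), mul_zero]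

theorem pderiv_mem_weightLT {i : σ} (hp : p ∈ weightLT R w (m + w i)) :
    pderiv i p ∈ weightLT R w m := by
  rw [mem_weightLT] at hp ⊢
  intro β hβ
  rw [coeff_pderiv, hp, zero_mul]
  simpa [Finsupp.weight_single] using hβ

theorem weightedHomogeneousComponent_mem_restrictSupport {s : Set (σ →₀ ℕ)}
    (hp : p ∈ restrictSupport R s) (m : ℕ) :
    weightedHomogeneousComponent w m p ∈ restrictSupport R s := by
  classical
  rw [mem_restrictSupport_iff, support_weightedHomogeneousComponent]
  exact (Finset.coe_subset.2 (Finset.filter_subset _ _)).trans hp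

end CommSemiring

variable {R σ : Type*} [CommRing R] {w : σ → ℕ}

theorem sub_weightedHomogeneousComponent_mem_weightLT {m : ℕ} {p : MvPolynomial σ R}
    (hp : p ∈ weightLT R w (m + 1)) :
    p - weightedHomogeneousComponent w m p ∈ weightLT R w m := by
  classical
  rw [mem_weightLT] at hp ⊢
  intro β hβ
  rw [coeff_sub, coeff_weightedHomogeneousComponent]
  split_ifs with hm
  · exact sub_self _
  · rw [sub_zero, hp β (by lia)]

/-- The ideal of leading forms of `J` with respect to the weights `w`: a polynomial belongs to it
when each of its components, say in degree `m`, agrees with an element of `J` up to terms of weight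
less than `m`. Quantifying over components makes the set closed under addition. -/
def leadingFormIdeal (w : σ → ℕ) (J : Ideal (MvPolynomial σ R)) :
    Ideal (MvPolynomial σ R) where
  carrier := {p | ∀ m, ∃ h ∈ J, h - weightedHomogeneousComponent w m p ∈ weightLT R w m}
  zero_mem' m := ⟨0, J.zero_mem, by simp⟩
  add_mem' {p q} hp hq m := by
    obtain ⟨h, hJ, hh⟩ := hp m
    obtain ⟨h', hJ', hh'⟩ := hq m
    refine ⟨h + h', J.add_mem hJ hJ', ?_⟩
    rw [map_add, add_sub_add_comm]
    exact Submodule.add_mem _ hh hh'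
  smul_mem' a p hp m := by
    choose h hJ hh using hp
    refine ⟨∑ kl ∈ Finset.HasAntidiagonal.antidiagonal m,
        weightedHomogeneousComponent w kl.1 a * h kl.2,
      J.sum_mem fun kl _ => J.mul_mem_left _ (hJ kl.2), ?_⟩
    rw [smul_eq_mul, weightedHomogeneousComponent_mul, ← Finset.sum_sub_distrib]
    refine Submodule.sum_mem _ fun kl hkl => ?_
    rw [← mul_sub, ← Finset.HasAntidiagonal.mem_antidiagonal.1 hkl]
    exact mul_mem_weightLT (weightedHomogeneousComponent_mem w a kl.1) (hh kl.2)

theorem weightLT_le_of_restrictSupport_sup_leadingFormIdeal_eq_top {s : Set (σ →₀ ℕ)}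
    {J : Ideal (MvPolynomial σ R)}
    (hs : restrictSupport R s ⊔ (leadingFormIdeal w J).restrictScalars R = ⊤) (m : ℕ) :
    weightLT R w m ≤ restrictSupport R s ⊔ J.restrictScalars R := by
  induction m with
  | zero => exact weightLT_zero.trans_le bot_le
  | succ m ih =>
    intro p hp
    obtain ⟨a, ha, b, hb, rfl⟩ := Submodule.mem_sup.1 (hs.ge (Submodule.mem_top (x := p)))
    obtain ⟨h, hJ, hh⟩ := hb m
    have hlow := Submodule.sub_mem _ (sub_weightedHomogeneousComponent_mem_weightLT hp) hh
    have hsplit : a + b = weightedHomogeneousComponent w m a + h +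
        (a + b - weightedHomogeneousComponent w m (a + b) -
          (h - weightedHomogeneousComponent w m b)) := by
      rw [map_add]
      ring
    rw [hsplit]
    exact Submodule.add_mem _ (Submodule.add_mem_sup
      (weightedHomogeneousComponent_mem_restrictSupport ha m) hJ) (ih hlow)

theorem finite_quotient_of_finite_quotient_leadingFormIdeal {J : Ideal (MvPolynomial σ R)}
    (h : Module.Finite R (MvPolynomial σ R ⧸ leadingFormIdeal w J)) :
    Module.Finite R (MvPolynomial σ R ⧸ J) := by
  rw [finite_quotient_iff_exists_restrictSupport_sup_eq_top] at h ⊢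
  obtain ⟨s, hs⟩ := h
  refine ⟨s, top_unique fun p _ => ?_⟩
  exact weightLT_le_of_restrictSupport_sup_leadingFormIdeal_eq_top hs _
    (mem_weightLT_of_weightedTotalDegree_lt (Nat.lt_succ_self (weightedTotalDegree w p)))

end WeightFiltration

section JacobianIdeal

/-- The ideal generated by the partial derivatives of `f`; the Milnor algebra of `f` is the
quotient by it. -/
noncomputable def jacobianIdeal {R σ : Type*} [CommSemiring R] (f : MvPolynomial σ R) :
    Ideal (MvPolynomial σ R) :=
  Ideal.span (Set.range fun i => pderiv i f)

/-- Strong tameness of `f` with respect to the weights `w`: the last quasi-homogeneous part of `f`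
has no critical point other than the origin. -/
def IsStronglyTame {R σ : Type*} [CommSemiring R] (w : σ → ℕ) (f : MvPolynomial σ R) : Prop :=
  ∀ x : σ → R, (∀ i, eval x (pderiv i
    (weightedHomogeneousComponent w (weightedTotalDegree w f) f)) = 0) → x = 0

theorem zeroLocus_jacobianIdeal {K σ : Type*} [Field K] (f : MvPolynomial σ K) :
    zeroLocus K (jacobianIdeal f) = {x | ∀ i, eval x (pderiv i f) = 0} := by
  rw [jacobianIdeal, zeroLocus_span]
  simp [aeval_eq_eval]

theorem jacobianIdeal_weightedHomogeneousComponent_le_leadingFormIdeal {R σ : Type*} [CommRing R]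
    {w : σ → ℕ} {f : MvPolynomial σ R} {d : ℕ} (hf : f ∈ weightLT R w (d + 1)) :
    jacobianIdeal (weightedHomogeneousComponent w d f) ≤ leadingFormIdeal w (jacobianIdeal f) := by
  refine Ideal.span_le.2 (Set.range_subset_iff.2 fun i m => ?_)
  have hpderiv := weightedHomogeneousComponent_pderiv w m i (weightedHomogeneousComponent w d f)
  rw [weightedHomogeneousComponent_of_mem (weightedHomogeneousComponent_mem w f d)] at hpderiv
  rw [hpderiv]
  split_ifs with hm
  · subst hm
    refine ⟨pderiv i f, Ideal.subset_span ⟨i, rfl⟩, ?_⟩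
    rw [← map_sub]
    exact pderiv_mem_weightLT (sub_weightedHomogeneousComponent_mem_weightLT hf)
  · exact ⟨0, Ideal.zero_mem _, by simp⟩

variable {K σ : Type*} [Field K] [IsAlgClosed K] [Finite σ] {w : σ → ℕ} {f : MvPolynomial σ K}

theorem IsStronglyTame.finite_quotient_jacobianIdeal (hf : IsStronglyTame w f) :
    Module.Finite K (MvPolynomial σ K ⧸ jacobianIdeal f) := by
  let g := weightedHomogeneousComponent w (weightedTotalDegree w f) f
  have hzero : zeroLocus K (jacobianIdeal g) ⊆ {0} := by
    rw [zeroLocus_jacobianIdeal]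
    exact hf
  have hle : jacobianIdeal g ≤ leadingFormIdeal w (jacobianIdeal f) :=
    jacobianIdeal_weightedHomogeneousComponent_le_leadingFormIdeal
      (mem_weightLT_of_weightedTotalDegree_lt (Nat.lt_succ_self _))
  exact finite_quotient_of_finite_quotient_leadingFormIdeal <| finite_quotient_of_finite_zeroLocus
    (Set.Finite.subset (Set.finite_singleton 0) ((zeroLocus_anti_mono hle).trans hzero))

theorem milnor_algebra_findim_and_eigenvalues_general (hf : IsStronglyTame w f) :
    FiniteDimensional K (MvPolynomial σ K ⧸ jacobianIdeal f) ∧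
    ∀ c : K,
      Module.End.HasEigenvalue (LinearMap.mulLeft K (Ideal.Quotient.mk (jacobianIdeal f) f)) c ↔
        c ∈ (fun x => eval x f) '' {x | ∀ i, eval x (pderiv i f) = 0} := by
  have hfin := hf.finite_quotient_jacobianIdeal
  refine ⟨hfin, fun c => ?_⟩
  rw [Module.End.hasEigenvalue_iff_mem_spectrum, spectrum_mulLeft, spectrum_quotient_mk,
    zeroLocus_jacobianIdeal]

end JacobianIdeal

/-- For a strongly tame polynomial `f`, the Milnor algebra
`V_f = ℂ[x]/⟨∂f/∂x₁,…,∂f/∂x_{n+1}⟩` is a finite-dimensional ℂ-vector space, and the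
eigenvalues of the linear operator `A : V_f → V_f` of multiplication by `f` are exactly
the critical values of `f`. -/
theorem milnor_algebra_findim_and_eigenvalues
    (n : ℕ) (hn : 1 ≤ n) (α : Fin (n + 1) → ℕ)
    (hαpos : ∀ i, 0 < α i) (hα : Finset.univ.gcd α = 1)
    (f : MvPolynomial (Fin (n + 1)) ℂ) (d : ℕ)
    (hd : MvPolynomial.weightedTotalDegree α f = d)
    (g : MvPolynomial (Fin (n + 1)) ℂ)
    (hg : g = weightedHomogeneousComponent α d f)
    (hg0 : g ≠ 0)
    (htame : ∀ x : Fin (n + 1) → ℂ, (∀ i, eval x (pderiv i g) = 0) → x = 0)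
    (J : Ideal (MvPolynomial (Fin (n + 1)) ℂ))
    (hJ : J = Ideal.span (Set.range fun i => pderiv i f))
    (A : Module.End ℂ (MvPolynomial (Fin (n + 1)) ℂ ⧸ J))
    (hA : A = LinearMap.mulLeft ℂ (Ideal.Quotient.mk J f)) :
    FiniteDimensional ℂ (MvPolynomial (Fin (n + 1)) ℂ ⧸ J) ∧
    ∀ c : ℂ, (A.HasEigenvalue c ↔
      c ∈ (fun x => eval x f) '' {x : Fin (n + 1) → ℂ | ∀ i, eval x (pderiv i f) = 0}) := by
  subst hd hg hJ hA
  exact milnor_algebra_findim_and_eigenvalues_general htame
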